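/- Let F = (f₁,…,f_n) : ℝ^n → ℝ^n be a polynomial mapping with every f_j nonconstant and f_j(0) = 0, and suppose every f_j is convenient. Then F is non-degenerate at infinity if and only if F is non-degenerate at infinity in the sense of Bivià-Ausina. -/

import Mathlib

open MvPolynomial Filter

/-- The linear form `l_p(ν) = ∑ i, p i * ν i`. -/
def lP {n : ℕ} (p : Fin n → ℤ) (ν : Fin n →₀ ℕ) : ℤ := ∑ i, p i * (ν i : ℤ)

/-- `d_p(f)`: the minimum of `l_p` over `{0} ∪ supp(f)`. -/
noncomputable def dP {n : ℕ} (p : Fin n → ℤ) (f : MvPolynomial (Fin n) ℝ) : ℤ :=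
  (insert (0 : Fin n →₀ ℕ) f.support).inf' (Finset.insert_nonempty _ _) (lP p)

/-- The face polynomial `f_p`: the sum of the monomials of `f` whose exponent `ν`
satisfies `l_p(ν) = d_p(f)` (zero if no `ν ∈ supp(f)` attains the minimum). -/
noncomputable def facePoly {n : ℕ} (p : Fin n → ℤ) (f : MvPolynomial (Fin n) ℝ) :
    MvPolynomial (Fin n) ℝ :=
  ∑ ν ∈ f.support.filter (fun ν => lP p ν = dP p f), monomial ν (coeff ν f)

/-- The gradient vector of a polynomial at a point (as a plain vector of `ℝⁿ`). -/
noncomputable def rgradV {n : ℕ} (f : MvPolynomial (Fin n) ℝ) (x : Fin n → ℝ) :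
    Fin n → ℝ :=
  fun i => eval x (pderiv i f)

/-- `I_p = {j : d_p(f_j) < 0}`. -/
noncomputable def Iset {n k : ℕ} (p : Fin n → ℤ) (f : Fin k → MvPolynomial (Fin n) ℝ) :
    Set (Fin k) :=
  { j | dP p (f j) < 0 }

/-- `J_p = {j : l_p(ν) > 0 for all ν ∈ supp(f_j)}`. -/
def Jset {n k : ℕ} (p : Fin n → ℤ) (f : Fin k → MvPolynomial (Fin n) ℝ) :
    Set (Fin k) :=
  { j | ∀ ν ∈ (f j).support, 0 < lP p ν }

/-- `F` is non-degenerate at infinity. -/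
noncomputable def NondegAtInfinity {n k : ℕ} (f : Fin k → MvPolynomial (Fin n) ℝ) :
    Prop :=
  ∀ p : Fin n → ℤ, (∃ i, p i < 0) → (Iset p f).Nonempty → Jset p f = ∅ →
    ∀ x : Fin n → ℝ, (∀ i, x i ≠ 0) →
      (∀ j ∈ Iset p f, eval x (facePoly p (f j)) = 0) →
      LinearIndependent ℝ (fun j : Iset p f => rgradV (facePoly p (f j)) x)

/-- `f` is convenient: its support meets every coordinate axis. -/
def Convenient {n : ℕ} (f : MvPolynomial (Fin n) ℝ) : Prop :=
  ∀ i : Fin n, ∃ m : ℕ, 1 ≤ m ∧ Finsupp.single i m ∈ f.support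

/-- `F` is non-degenerate at infinity in the sense of Bivià-Ausina. -/
noncomputable def BANondegAtInfinity {n k : ℕ} (f : Fin k → MvPolynomial (Fin n) ℝ) :
    Prop :=
  ∀ p : Fin n → ℤ, (∃ i, p i < 0) →
    ¬ ∃ x : Fin n → ℝ, (∀ i, x i ≠ 0) ∧ ∀ j, eval x (facePoly p (f j)) = 0

theorem dP_neg_of_convenient {n : ℕ} (p : Fin n → ℤ) (g : MvPolynomial (Fin n) ℝ)
    (hg : Convenient g) (hp : ∃ i, p i < 0) : dP p g < 0 := by
  obtain ⟨i, hi⟩ := hp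
  obtain ⟨m, hm, hmem⟩ := hg i
  have h1 : dP p g ≤ lP p (Finsupp.single i m) :=
    Finset.inf'_le _ (Finset.mem_insert_of_mem hmem)
  have h2 : lP p (Finsupp.single i m) = p i * m := by
    unfold lP
    rw [Finset.sum_eq_single i]
    · simp
    · intro b _ hb
      simp [Finsupp.single_eq_of_ne hb]
    · simp
  have h3 : (1 : ℤ) ≤ m := by exact_mod_cast hm
  nlinarith

theorem euler_facePoly {n : ℕ} (p : Fin n → ℤ) (g : MvPolynomial (Fin n) ℝ) (x : Fin n → ℝ) :
    ∑ i, rgradV (facePoly p g) x i * ((p i : ℝ) * x i)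
      = (dP p g : ℝ) * eval x (facePoly p g) := by
  have key : ∀ i, rgradV (facePoly p g) x i * ((p i : ℝ) * x i)
      = ∑ ν ∈ g.support.filter (fun ν => lP p ν = dP p g),
        ((p i : ℝ) * (ν i : ℝ)) * eval x (monomial ν (coeff ν g)) := by
    intro i
    unfold rgradV facePoly
    rw [map_sum, map_sum, Finset.sum_mul]
    refine Finset.sum_congr rfl fun ν _ => ?_
    have h := congrArg (eval x) (X_mul_pderiv_monomial (i := i) (m := ν) (r := coeff ν g))
    rw [map_mul, eval_X, map_nsmul, nsmul_eq_mul] at h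
    linear_combination (p i : ℝ) * h
  rw [Finset.sum_congr rfl fun i _ => key i, Finset.sum_comm]
  unfold facePoly
  rw [map_sum, Finset.mul_sum]
  refine Finset.sum_congr rfl fun ν hν => ?_
  rw [← Finset.sum_mul, ← (Finset.mem_filter.mp hν).2]
  simp [lP]

/-- For `F : ℝⁿ → ℝⁿ` with all components nonconstant, vanishing at
`0` and convenient, non-degeneracy at infinity is equivalent to Bivià-Ausina
non-degeneracy at infinity. -/
theorem nondeg_iff_BAnondeg {n : ℕ}
    (f : Fin n → MvPolynomial (Fin n) ℝ)
    (hnc : ∀ j, (f j).totalDegree ≠ 0)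
    (h0 : ∀ j, eval (0 : Fin n → ℝ) (f j) = 0)
    (hconv : ∀ j, Convenient (f j)) :
    NondegAtInfinity f ↔ BANondegAtInfinity f := by
  have hI : ∀ p : Fin n → ℤ, (∃ i, p i < 0) → ∀ j, j ∈ Iset p f :=
    fun p hp j => dP_neg_of_convenient p (f j) (hconv j) hp
  constructor
  · rintro hN p hp ⟨x, hx, hz⟩
    obtain ⟨i, hi⟩ := hp
    have hJ : Jset p f = ∅ := by
      ext j
      simp only [Set.mem_empty_iff_false, iff_false]
      intro hj
      have h1 : 0 ≤ dP p (f j) := by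
        refine Finset.le_inf' _ _ fun ν hν => ?_
        rcases Finset.mem_insert.mp hν with rfl | h
        · simp [lP]
        · exact (hj ν h).le
      exact absurd (hI p ⟨i, hi⟩ j) (not_lt.mpr h1)
    have hL := hN p ⟨i, hi⟩ ⟨i, hI p ⟨i, hi⟩ i⟩ hJ x hx (fun j _ => hz j)
    have hL2 : LinearIndependent ℝ (fun j : Fin n => rgradV (facePoly p (f j)) x) :=
      hL.comp (fun j : Fin n => (⟨j, hI p ⟨i, hi⟩ j⟩ : Iset p f))
        (fun a b h => congrArg Subtype.val h)
    let A : Matrix (Fin n) (Fin n) ℝ := Matrix.of fun j => rgradV (facePoly p (f j)) x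
    have hA : IsUnit A := Matrix.linearIndependent_rows_iff_isUnit.mp hL2
    have hv : A.mulVec (fun i => (p i : ℝ) * x i) = A.mulVec 0 := by
      rw [Matrix.mulVec_zero]
      funext j
      have := euler_facePoly p (f j) x
      rw [hz j, mul_zero] at this
      exact this
    have h := congrFun (Matrix.mulVec_injective_of_isUnit hA hv) i
    have hpi : (p i : ℝ) ≠ 0 := by exact_mod_cast hi.ne
    exact mul_ne_zero hpi (hx i) h
  · intro hB p hp _ _ x hx hz
    exact absurd ⟨x, hx, fun j => hz j (hI p hp j)⟩ (hB p hp)
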